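/- Let A be a set with a length function μ, and for a positive integer d let ψ_d : F(A) → F(A) be the endomorphism of the free group determined by ψ_d(a) = a^d for all a ∈ A. Then for every g ∈ F(A), ‖ψ_d(g)‖_{F(A;μ)} = d·‖g‖_{F(A;μ)}. -/

import Mathlib

/-- The set of total lengths of expressions of `g` as a product of conjugates
of generators `gen i ^ {±1}`, each weighted by the length function `ℓ`. -/
def wordNormSet {G : Type*} [Group G] {I : Type*}
    (gen : I → G) (ℓ : I → ℝ) (g : G) : Set ℝ :=
  { x | ∃ l : List (G × I × Bool),
      g = (l.map fun p => p.1 * (if p.2.2 then gen p.2.1 else (gen p.2.1)⁻¹) * p.1⁻¹).prod ∧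
      x = (l.map fun p => ℓ p.2.1).sum }

/-- The conjugation-invariant word norm associated to a length function. -/
noncomputable def wordNorm {G : Type*} [Group G] {I : Type*}
    (gen : I → G) (ℓ : I → ℝ) (g : G) : ℝ :=
  sInf (wordNormSet gen ℓ g)

/-- The endomorphism `ψ_d` of the free group `F(A)` determined by `ψ_d(a) = a^d`. -/
def psiD {α : Type*} (d : ℕ) : FreeGroup α →* FreeGroup α :=
  FreeGroup.lift (fun a => FreeGroup.of a ^ d)

/-!
Upper bound: `ψ_d` sends a conjugate of a generator `a` to the `d`-th power of that conjugate, that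
is, to a product of `d` conjugates of `a`.

Lower bound: a word represents the identity iff its letters can be matched completely into mutually
inverse pairs without crossings, and the norm of the element represented by a word `w` is the least
total length of the unmatched letters in a noncrossing partial matching of `w`. The image `ψ_d(w)`
is spelled by repeating each letter of `w` `d` times, so a noncrossing matching of this longer word
has a counting matrix `M`, where `M p q` is the number of copies of the letter `p` matched with
copies of the letter `q`, unmatched copies of `p` being counted in `M p p`. As `M / d` is doubly
stochastic, Birkhoff's theorem and averaging give a permutation `σ` supported on `M` whose fixed
points have total length at most `1 / d` times that of the unmatched letters. Off the diagonal `M`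
pairs only inverse letters, so using `σ` at positive letters and `σ⁻¹` at negative ones gives an
involution, and it is noncrossing because the pairs in the support of `M` do not cross.
-/

section WordNormSet

variable {G I : Type*} [Group G] {gen : I → G} {ℓ : I → ℝ} {g h : G} {x y : ℝ}

lemma zero_mem_wordNormSet_one : (0 : ℝ) ∈ wordNormSet gen ℓ 1 :=
  ⟨[], rfl, rfl⟩

lemma mem_wordNormSet_gen (i : I) : ℓ i ∈ wordNormSet gen ℓ (gen i) :=
  ⟨[(1, i, true)], by simp, by simp⟩

lemma add_mem_wordNormSet_mul (hx : x ∈ wordNormSet gen ℓ g) (hy : y ∈ wordNormSet gen ℓ h) :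
    x + y ∈ wordNormSet gen ℓ (g * h) := by
  obtain ⟨l, rfl, rfl⟩ := hx
  obtain ⟨m, rfl, rfl⟩ := hy
  exact ⟨l ++ m, by simp, by simp⟩

lemma mem_wordNormSet_conj (hx : x ∈ wordNormSet gen ℓ g) (k : G) :
    x ∈ wordNormSet gen ℓ (k * g * k⁻¹) := by
  obtain ⟨l, rfl, rfl⟩ := hx
  refine ⟨l.map fun p => (k * p.1, p.2), ?_, by simp [Function.comp_def]⟩
  rw [← MulAut.conj_apply, map_list_prod]
  simp [Function.comp_def, mul_assoc]

lemma mem_wordNormSet_inv (hx : x ∈ wordNormSet gen ℓ g) : x ∈ wordNormSet gen ℓ g⁻¹ := by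
  obtain ⟨l, rfl, rfl⟩ := hx
  refine ⟨(l.map fun p => (p.1, p.2.1, !p.2.2)).reverse, ?_, by simp [Function.comp_def]⟩
  rw [List.prod_inv_reverse, List.map_reverse, List.map_map, List.map_map]
  congr 3 with p
  rcases p with ⟨k, i, b⟩
  cases b <;> simp [mul_assoc]

lemma natCast_mul_mem_wordNormSet_pow (hx : x ∈ wordNormSet gen ℓ g) (n : ℕ) :
    n * x ∈ wordNormSet gen ℓ (g ^ n) := by
  induction n with
  | zero => simpa using zero_mem_wordNormSet_one
  | succ n ih =>
    rw [pow_succ, Nat.cast_succ, add_one_mul]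
    exact add_mem_wordNormSet_mul ih hx

lemma wordNorm_le_of_mem_wordNormSet (hℓ : ∀ i, 0 ≤ ℓ i) (hx : x ∈ wordNormSet gen ℓ g) :
    wordNorm gen ℓ g ≤ x := by
  refine csInf_le ⟨0, ?_⟩ hx
  rintro _ ⟨l, -, rfl⟩
  exact List.sum_nonneg (List.forall_mem_map.2 fun p _ => hℓ p.2.1)

variable {H J : Type*} [Group H] {gen' : J → H} {ℓ' : J → ℝ} {φ : G →* H} {c : ℝ}

lemma mul_mem_wordNormSet_map (hφ : ∀ i, c * ℓ i ∈ wordNormSet gen' ℓ' (φ (gen i)))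
    (hx : x ∈ wordNormSet gen ℓ g) : c * x ∈ wordNormSet gen' ℓ' (φ g) := by
  obtain ⟨l, rfl, rfl⟩ := hx
  induction l with
  | nil => simpa using zero_mem_wordNormSet_one
  | cons p l ih =>
    simp only [List.map_cons, List.prod_cons, List.sum_cons, map_mul, map_inv, mul_add]
    refine add_mem_wordNormSet_mul (mem_wordNormSet_conj ?_ _) ih
    split_ifs
    · exact hφ _
    · rw [map_inv]
      exact mem_wordNormSet_inv (hφ _)

lemma wordNorm_map_le (hℓ' : ∀ j, 0 ≤ ℓ' j) (hc : 0 ≤ c)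
    (hφ : ∀ i, c * ℓ i ∈ wordNormSet gen' ℓ' (φ (gen i))) (hg : (wordNormSet gen ℓ g).Nonempty) :
    wordNorm gen' ℓ' (φ g) ≤ c * wordNorm gen ℓ g := by
  rw [wordNorm, wordNorm, ← smul_eq_mul, ← Real.sInf_smul_of_nonneg hc]
  refine le_csInf hg.smul_set ?_
  rintro _ ⟨x, hx, rfl⟩
  exact wordNorm_le_of_mem_wordNormSet hℓ' (mul_mem_wordNormSet_map hφ hx)

end WordNormSet

section DoublyStochastic

/-- A permutation occurring with positive weight in a Birkhoff decomposition of `M` is supported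
on `M`, and one of them does no worse than their weighted average. -/
lemma exists_perm_sum_le_of_mem_doublyStochastic {R n : Type*} [Field R] [LinearOrder R]
    [IsStrictOrderedRing R] [Fintype n] [DecidableEq n] {M : Matrix n n R}
    (hM : M ∈ doublyStochastic R n) (c : n → n → R) :
    ∃ σ : Equiv.Perm n, (∀ i, 0 < M i (σ i)) ∧ ∑ i, c i (σ i) ≤ ∑ i, ∑ j, M i j * c i j := by
  obtain ⟨w, hw₀, hw₁, hw⟩ := exists_eq_sum_perm_of_mem_doublyStochastic hM
  have entry (i j : n) : M i j = ∑ σ, w σ * if σ i = j then 1 else 0 := by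
    simp [← hw, Matrix.sum_apply, PEquiv.toMatrix_apply, Equiv.toPEquiv_apply]
  have average : ∑ i, ∑ j, M i j * c i j = ∑ σ, w σ * ∑ i, c i (σ i) := by
    simp only [entry, Finset.sum_mul, Finset.mul_sum]
    rw [Finset.sum_comm_cycle]
    simp
  have sum_pos_part (f : Equiv.Perm n → R) : ∑ σ with 0 < w σ, w σ * f σ = ∑ σ, w σ * f σ :=
    Finset.sum_filter_of_ne fun σ _ h => (hw₀ σ).lt_of_ne' (left_ne_zero_of_mul h)
  have nonempty : (Finset.univ.filter fun σ => 0 < w σ).Nonempty := by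
    refine Finset.nonempty_of_sum_ne_zero (f := fun σ => w σ * 1) ?_
    rw [sum_pos_part fun _ => 1]
    simp [hw₁]
  obtain ⟨σ, hσ, hle⟩ := Finset.exists_le_of_sum_le
    (f := fun σ => w σ * ∑ i, c i (σ i)) (g := fun σ => w σ * ∑ i, ∑ j, M i j * c i j) nonempty
    (by rw [sum_pos_part, sum_pos_part, ← Finset.sum_mul, hw₁, one_mul, average])
  have w_pos : 0 < w σ := (Finset.mem_filter.1 hσ).2
  refine ⟨σ, fun i => ?_, le_of_mul_le_mul_left hle w_pos⟩
  rw [entry]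
  exact Finset.sum_pos' (fun τ _ => mul_nonneg (hw₀ τ) (by positivity))
    ⟨σ, Finset.mem_univ σ, by simpa⟩

end DoublyStochastic

section FreeGroupWords

open FreeGroup

variable {α : Type*}

lemma append_cons_eq_append_iff {β : Type*} {y : β} {s t m₁ m₂ : List β} :
    s ++ y :: t = m₁ ++ m₂ ↔
      (∃ u, m₁ = s ++ y :: u ∧ t = u ++ m₂) ∨ ∃ u, s = m₁ ++ u ∧ m₂ = u ++ y :: t := by
  rw [List.append_eq_append_iff]
  constructor
  · rintro (⟨_ | ⟨z, u⟩, rfl, h⟩ | ⟨u, rfl, rfl⟩)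
    · exact .inr ⟨[], by simpa using h.symm⟩
    · obtain ⟨rfl, rfl⟩ := List.cons.inj h
      exact .inl ⟨u, rfl, rfl⟩
    · exact .inr ⟨u, rfl, rfl⟩
  · rintro (⟨u, rfl, rfl⟩ | ⟨u, rfl, rfl⟩)
    · exact .inl ⟨y :: u, rfl, rfl⟩
    · exact .inr ⟨u, rfl, rfl⟩

lemma mk_surjective : Function.Surjective (mk : List (α × Bool) → FreeGroup α) :=
  Quot.mk_surjective

lemma mk_cons_append_inv_cons (x : α × Bool) (L M : List (α × Bool)) :
    mk (x :: (L ++ (x.1, !x.2) :: M)) = mk [x] * mk L * (mk [x])⁻¹ * mk M := by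
  simp [invRev]

lemma mem_wordNormSet_letter (μ : α → ℝ) (x : α × Bool) : μ x.1 ∈ wordNormSet of μ (mk [x]) := by
  rcases x with ⟨a, _ | _⟩
  · exact mem_wordNormSet_inv (mem_wordNormSet_gen a)
  · exact mem_wordNormSet_gen a

lemma exists_eq_append_cons_of_red_cons {y : α × Bool} {l r : List (α × Bool)}
    (h : Red l (y :: r)) : ∃ s t, l = s ++ y :: t ∧ Red s [] ∧ Red t r := by
  induction h using Relation.ReflTransGen.head_induction_on with
  | refl => exact ⟨[], r, rfl, Red.refl, Red.refl⟩
  | head step _ ih =>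
    obtain ⟨s, t, hm, hs, ht⟩ := ih
    obtain @⟨m₁, m₂, a, b⟩ := step
    rcases append_cons_eq_append_iff.1 hm.symm with ⟨u, rfl, rfl⟩ | ⟨u, rfl, rfl⟩
    · exact ⟨s, u ++ (a, b) :: (a, !b) :: m₂, by simp, hs, ht.head .not⟩
    · exact ⟨m₁ ++ (a, b) :: (a, !b) :: u, t, by simp, hs.head .not, ht⟩

lemma red_nil_iff_mk_eq_one {L : List (α × Bool)} : Red L [] ↔ mk L = 1 := by
  refine ⟨fun h => Red.exact.2 ⟨[], h, Red.refl⟩, fun h => ?_⟩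
  obtain ⟨M, hL, hM⟩ := Red.exact.1 (h.trans one_eq_mk)
  rwa [Red.nil_iff.1 hM] at hL

lemma exists_eq_append_inv_cons_of_mk_cons_eq_one {x : α × Bool} {l : List (α × Bool)}
    (h : mk (x :: l) = 1) : ∃ s t, l = s ++ (x.1, !x.2) :: t ∧ mk s = 1 ∧ mk t = 1 := by
  simp only [← red_nil_iff_mk_eq_one] at h ⊢
  exact exists_eq_append_cons_of_red_cons (Red.cons_nil_iff_singleton.1 h)

lemma mk_append_eq_one_comm {L M : List (α × Bool)} : mk (L ++ M) = 1 ↔ mk (M ++ L) = 1 := by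
  simp only [← mul_mk, mul_eq_one_comm]

end FreeGroupWords

section NoncrossingPairing

variable {α ι : Type*} [LinearOrder ι] {w : ι → α × Bool} {σ τ : ι → ι}

/-- A noncrossing partial matching of the letters `w i` into mutually inverse pairs, encoded as
the involution `τ` that exchanges matched positions and fixes the unmatched ones. -/
structure IsNoncrossingPairing (w : ι → α × Bool) (τ : ι → ι) : Prop where
  involutive : Function.Involutive τ
  letter : ∀ i, τ i ≠ i → w (τ i) = ((w i).1, !(w i).2)
  noncrossing : ∀ i j, i < j → j < τ i → τ j ≤ τ i

namespace IsNoncrossingPairing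

lemma id (w : ι → α × Bool) : IsNoncrossingPairing w fun i => i where
  involutive _ := rfl
  letter _ h := absurd rfl h
  noncrossing _ _ _ _ := by order

lemma mapsTo_Ioo (hτ : IsNoncrossingPairing w τ) (i : ι) :
    Set.MapsTo τ (Set.Ioo i (τ i)) (Set.Ioo i (τ i)) := by
  have := hτ.involutive
  have := hτ.noncrossing
  intro j hj
  grind [Function.Involutive]

lemma mapsTo_of_forall_ne (hτ : IsNoncrossingPairing w τ) {s : Set ι}
    (hs : ∀ i, τ i ≠ i → i ∈ s) : Set.MapsTo τ s s := by
  intro i hi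
  by_cases h : τ i = i
  · rwa [h]
  · exact hs _ (by rwa [hτ.involutive, ne_comm])

lemma juxtapose (hσ : IsNoncrossingPairing w σ) (hτ : IsNoncrossingPairing w τ) {q : ι}
    (hσq : ∀ i, σ i ≠ i → i ≤ q) (hτq : ∀ i, τ i ≠ i → q < i) :
    IsNoncrossingPairing w fun i => if i ≤ q then σ i else τ i := by
  have hσ_le (i : ι) (hi : i ≤ q) : σ i ≤ q := hσ.mapsTo_of_forall_ne (s := Set.Iic q) hσq hi
  have hτ_lt (i : ι) (hi : q < i) : q < τ i := hτ.mapsTo_of_forall_ne (s := Set.Ioi q) hτq hi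
  refine ⟨fun i => ?_, fun i => ?_, fun i j hij => ?_⟩ <;> rcases le_or_gt i q with hi | hi
  · simp [hi, hσ_le, hσ.involutive i]
  · simp [hi.not_ge, (hτ_lt i hi).not_ge, hτ.involutive i]
  · simpa [hi] using hσ.letter i
  · simpa [hi.not_ge] using hτ.letter i
  · simp only [hi, if_true]
    intro hj
    simpa [hj.le.trans (hσ_le i hi)] using hσ.noncrossing i j hij hj
  · simpa [hi.not_ge, (hi.trans hij).not_ge] using hτ.noncrossing i j hij

lemma nest {p q : ι} (hτ : IsNoncrossingPairing w τ) (hpq : p < q)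
    (hw : w q = ((w p).1, !(w p).2)) (hτpq : ∀ i, τ i ≠ i → p < i ∧ i < q) :
    IsNoncrossingPairing w fun i => if i = p then q else if i = q then p else τ i := by
  have hp : τ p = p := of_not_not fun h => (hτpq p h).1.false
  have hq : τ q = q := of_not_not fun h => (hτpq q h).2.false
  have hτ_lt (i : ι) (hi : i < q) : τ i < q :=
    hτ.mapsTo_of_forall_ne (s := Set.Iio q) (fun i h => (hτpq i h).2) hi
  have hτp (i : ι) : τ i = p ↔ i = p := by rw [hτ.involutive.eq_iff, hp, eq_comm]
  have hτq (i : ι) : τ i = q ↔ i = q := by rw [hτ.involutive.eq_iff, hq, eq_comm]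
  refine ⟨fun i => ?_, fun i => ?_, fun i j hij => ?_⟩
  · by_cases hip : i = p <;> by_cases hiq : i = q <;>
      simp [hip, hiq, hτp, hτq, hpq.ne', hτ.involutive i]
  · by_cases hip : i = p
    · simp [hip, hw]
    · by_cases hiq : i = q
      · simp [hiq, hpq.ne', hw]
      · simpa [hip, hiq] using hτ.letter i
  · have := hτ.noncrossing i j hij
    grind

lemma exists_eq_append_cons (hτ : IsNoncrossingPairing w τ) {p : ι} {r : List ι}
    (hsort : (p :: r).Pairwise (· < ·)) (hcl : ∀ i ∈ p :: r, τ i ∈ p :: r) (hp : τ p ≠ p) :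
    ∃ u v, r = u ++ τ p :: v ∧ (∀ i ∈ u, τ i ∈ u) ∧ ∀ i ∈ v, τ i ∈ v := by
  obtain ⟨u, v, rfl⟩ := List.append_of_mem ((List.mem_cons.1 (hcl p (by simp))).resolve_left hp)
  simp only [List.pairwise_cons, List.pairwise_append, List.mem_append, List.mem_cons] at hsort hcl
  have hu : ∀ i ∈ u, τ i ∈ u := by
    intro i hi
    have := hτ.mapsTo_Ioo p (x := i)
    grind
  refine ⟨u, v, rfl, hu, fun i hi => ?_⟩
  have := hτ.involutive i
  have := hτ.involutive p
  grind

lemma sum_fixed_mem_wordNormSet (hτ : IsNoncrossingPairing w τ) (μ : α → ℝ) (l : List ι)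
    (hsort : l.Pairwise (· < ·)) (hcl : ∀ i ∈ l, τ i ∈ l) :
    (l.map fun i => if τ i = i then μ (w i).1 else 0).sum ∈
      wordNormSet FreeGroup.of μ (FreeGroup.mk (l.map w)) := by
  induction hn : l.length using Nat.strong_induction_on generalizing l with | _ n ih
  subst hn
  cases l with
  | nil => exact zero_mem_wordNormSet_one
  | cons p r =>
    by_cases hp : τ p = p
    · have hr : ∀ i ∈ r, τ i ∈ r := by
        have := hτ.involutive
        grind [Function.Involutive]
      simp only [List.map_cons, List.sum_cons, if_pos hp]
      exact add_mem_wordNormSet_mul (mem_wordNormSet_letter _ _)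
        (ih _ (by simp) r hsort.of_cons hr rfl)
    · obtain ⟨u, v, rfl, hu, hv⟩ := hτ.exists_eq_append_cons hsort hcl hp
      have hτp : τ (τ p) ≠ τ p := by rwa [hτ.involutive, ne_comm]
      rw [List.pairwise_cons, List.pairwise_append] at hsort
      have hu := ih _ (by grind) u hsort.2.1 hu rfl
      have hv := ih _ (by grind) v hsort.2.2.1.of_cons hv rfl
      rw [List.map_cons (f := w), List.map_append (f := w), List.map_cons (f := w), hτ.letter p hp,
        mk_cons_append_inv_cons]
      simpa [hp, hτp] using
        add_mem_wordNormSet_mul (mem_wordNormSet_conj hu (FreeGroup.mk [w p])) hv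

end IsNoncrossingPairing

lemma exists_isNoncrossingPairing_of_mk_eq_one (w : ι → α × Bool) (l : List ι)
    (hsort : l.Pairwise (· < ·)) (hl : FreeGroup.mk (l.map w) = 1) :
    ∃ τ, IsNoncrossingPairing w τ ∧ ∀ i, τ i = i ↔ i ∉ l := by
  induction hn : l.length using Nat.strong_induction_on generalizing l with | _ n ih
  subst hn
  cases l with
  | nil => exact ⟨_, .id w, by simp⟩
  | cons p r =>
    obtain ⟨_, _, h, hs, ht⟩ := exists_eq_append_inv_cons_of_mk_cons_eq_one hl
    obtain ⟨u, _, rfl, rfl, h'⟩ := List.map_eq_append_iff.1 h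
    obtain ⟨q, v, rfl, hq, rfl⟩ := List.map_eq_cons_iff.1 h'
    simp only [List.pairwise_cons, List.pairwise_append, List.mem_append, List.mem_cons] at hsort
    obtain ⟨σ, hσ, hσu⟩ := ih _ (by grind) u hsort.2.1 hs rfl
    obtain ⟨τ, hτ, hτv⟩ := ih _ (by grind) v hsort.2.2.1.2 ht rfl
    have hpq : p < q := hsort.1 q (by simp)
    refine ⟨_, (hσ.nest hpq hq (by grind)).juxtapose (q := q) hτ (by grind) (by grind), ?_⟩
    grind

end NoncrossingPairing

section Trivializable

open FreeGroup

variable {α : Type*} {μ : α → ℝ} {L M : List (α × Bool)} {c : ℝ}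

/-- The total length of the letters of a word. -/
def wordWeight (μ : α → ℝ) (L : List (α × Bool)) : ℝ := (L.map fun x => μ x.1).sum

@[simp] lemma wordWeight_cons (x : α × Bool) :
    wordWeight μ (x :: L) = μ x.1 + wordWeight μ L := by
  simp [wordWeight]

@[simp] lemma wordWeight_append : wordWeight μ (L ++ M) = wordWeight μ L + wordWeight μ M := by
  simp [wordWeight]

/-- Deleting letters of total length at most `c` turns the word `L` into a word that represents
the identity. -/
def Trivializable (μ : α → ℝ) (L : List (α × Bool)) (c : ℝ) : Prop :=
  ∃ L', L'.Sublist L ∧ mk L' = 1 ∧ wordWeight μ L ≤ wordWeight μ L' + c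

lemma Trivializable.of_sublist {c' : ℝ} (h : Trivializable μ L c) (hLM : L.Sublist M)
    (hc : wordWeight μ M + c ≤ wordWeight μ L + c') : Trivializable μ M c' := by
  obtain ⟨L', hL', h₁, hc'⟩ := h
  exact ⟨L', hL'.trans hLM, h₁, by linarith⟩

/-- The partner of the removed letter is deleted as well. -/
lemma trivializable_append_of_mk_append_cons_eq_one {y : α × Bool}
    (h : mk (L ++ y :: M) = 1) : Trivializable μ (L ++ M) (μ y.1) := by
  rw [mk_append_eq_one_comm, List.cons_append] at h
  obtain ⟨s, t, hst, hs, ht⟩ := exists_eq_append_inv_cons_of_mk_cons_eq_one h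
  rcases append_cons_eq_append_iff.1 hst.symm with ⟨u, rfl, rfl⟩ | ⟨u, rfl, rfl⟩
  · refine ⟨L ++ (s ++ u), by simp, ?_, by simp only [wordWeight_append, wordWeight_cons]; linarith⟩
    rw [mk_append_eq_one_comm] at ht
    simpa only [← mul_mk, hs, one_mul] using ht
  · refine ⟨(u ++ t) ++ M, by simp, ?_, by simp only [wordWeight_append, wordWeight_cons]; linarith⟩
    rw [mk_append_eq_one_comm] at hs
    simpa only [← mul_mk, ht, mul_one] using hs

lemma Trivializable.of_red_step (h : Red.Step L M) (hM : Trivializable μ M c) :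
    Trivializable μ L c := by
  obtain ⟨⟩ := h
  obtain ⟨_, hL', h₁, hc⟩ := hM
  obtain ⟨k₁, k₂, rfl, hk₁, hk₂⟩ := List.sublist_append_iff.1 hL'
  exact ⟨_, hk₁.append ((hk₂.cons_cons _).cons_cons _), (Quot.sound .not).trans h₁,
    by simp only [wordWeight_append, wordWeight_cons] at hc ⊢; linarith⟩

/-- When exactly one letter of the cancelled pair was deleted, the partner of the other one is
deleted instead. -/
lemma Trivializable.red_step (hμ : ∀ a, 0 ≤ μ a) (h : Red.Step L M) (hL : Trivializable μ L c) :
    Trivializable μ M c := by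
  obtain @⟨m₁, m₂, a, b⟩ := h
  obtain ⟨_, hL', h₁, hc⟩ := hL
  obtain ⟨k₁, k₂, rfl, hk₁, hk₂⟩ := List.sublist_append_iff.1 hL'
  simp only [wordWeight_append, wordWeight_cons] at hc
  rcases List.sublist_cons_iff.1 hk₂ with hk | ⟨k₂, rfl, hk⟩ <;>
    rcases List.sublist_cons_iff.1 hk with hk' | ⟨k₃, rfl, hk'⟩
  · exact ⟨_, hk₁.append hk', h₁, by simp only [wordWeight_append]; linarith [hμ a]⟩
  · exact (trivializable_append_of_mk_append_cons_eq_one h₁).of_sublist (hk₁.append hk')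
      (by simp only [wordWeight_append, wordWeight_cons] at hc ⊢; linarith)
  · exact (trivializable_append_of_mk_append_cons_eq_one h₁).of_sublist (hk₁.append hk')
      (by simp only [wordWeight_append, wordWeight_cons] at hc ⊢; linarith)
  · exact ⟨_, hk₁.append hk', (Quot.sound .not).symm.trans h₁,
      by simp only [wordWeight_append, wordWeight_cons] at hc ⊢; linarith⟩

lemma trivializable_iff_of_mk_eq (hμ : ∀ a, 0 ≤ μ a) (h : mk L = mk M) :
    Trivializable μ L c ↔ Trivializable μ M c :=
  iff_of_eq <| congrArg (Quot.lift (Trivializable μ · c) fun _ _ hs =>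
    propext ⟨.red_step hμ hs, .of_red_step hs⟩) h

/-- In the word spelled out by an expression, delete the generator of each conjugate `k a k⁻¹`. -/
lemma trivializable_of_mem_wordNormSet (hμ : ∀ a, 0 ≤ μ a) {x : ℝ}
    (hx : x ∈ wordNormSet of μ (mk L)) : Trivializable μ L x := by
  obtain ⟨l, hl, rfl⟩ := hx
  induction l generalizing L with
  | nil =>
    rw [trivializable_iff_of_mk_eq hμ hl]
    exact ⟨[], .refl _, rfl, by simp⟩
  | cons p l ih =>
    obtain ⟨k, a, b⟩ := p
    obtain ⟨K, rfl⟩ := mk_surjective k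
    obtain ⟨M, hM⟩ := mk_surjective (l.map fun p => p.1 * (if p.2.2 then of p.2.1 else
      (of p.2.1)⁻¹) * p.1⁻¹).prod
    obtain ⟨M', hM', h₁, hc⟩ := ih hM
    have hL : mk L = mk ((K ++ (a, b) :: invRev K) ++ M) := by
      rw [hl, List.map_cons, List.prod_cons, ← hM]
      cases b <;> simp [of, invRev]
    have hK : mk (K ++ invRev K) = 1 := by rw [← mul_mk, ← inv_mk, mul_inv_cancel]
    rw [trivializable_iff_of_mk_eq hμ hL]
    refine ⟨(K ++ invRev K) ++ M', .append (by simp) hM', by rw [← mul_mk, hK, h₁, one_mul], ?_⟩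
    simp only [wordWeight_append, wordWeight_cons, List.map_cons, List.sum_cons]
    linarith

end Trivializable

section Words

open FreeGroup

variable {α : Type*} {μ : α → ℝ} {n : ℕ} {w : Fin n → α × Bool}

lemma IsNoncrossingPairing.sum_fixed_mem_wordNormSet_ofFn {τ : Fin n → Fin n}
    (hτ : IsNoncrossingPairing w τ) (μ : α → ℝ) :
    ∑ i with τ i = i, μ (w i).1 ∈ wordNormSet of μ (FreeGroup.mk (List.ofFn w)) := by
  rw [Finset.sum_filter, ← List.sum_ofFn, List.ofFn_eq_map, List.ofFn_eq_map]
  exact hτ.sum_fixed_mem_wordNormSet μ _ (List.pairwise_lt_finRange n)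
    fun i _ => List.mem_finRange (τ i)

lemma wordWeight_map {ι : Type*} [DecidableEq ι] {w : ι → α × Bool} {l : List ι} (hl : l.Nodup) :
    wordWeight μ (l.map w) = ∑ i ∈ l.toFinset, μ (w i).1 := by
  rw [List.sum_toFinset _ hl, wordWeight, List.map_map, Function.comp_def]

lemma wordNormSet_nonempty (μ : α → ℝ) (g : FreeGroup α) : (wordNormSet of μ g).Nonempty := by
  obtain ⟨L, rfl⟩ := mk_surjective g
  rw [← List.ofFn_get L]
  exact ⟨_, (IsNoncrossingPairing.id L.get).sum_fixed_mem_wordNormSet_ofFn μ⟩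

lemma exists_isNoncrossingPairing_sum_fixed_le (hμ : ∀ a, 0 ≤ μ a) {x : ℝ}
    (hx : x ∈ wordNormSet of μ (mk (List.ofFn w))) :
    ∃ τ, IsNoncrossingPairing w τ ∧ ∑ i with τ i = i, μ (w i).1 ≤ x := by
  obtain ⟨_, hL, h₁, hc⟩ := trivializable_of_mem_wordNormSet hμ hx
  rw [List.ofFn_eq_map] at hL hc
  obtain ⟨l, hl, rfl⟩ := List.sublist_map_iff.1 hL
  have hsort := (List.pairwise_lt_finRange n).sublist hl
  obtain ⟨τ, hτ, hfix⟩ := exists_isNoncrossingPairing_of_mk_eq_one w l hsort h₁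
  refine ⟨τ, hτ, ?_⟩
  have hdel : wordWeight μ (l.map w) = ∑ i with τ i ≠ i, μ (w i).1 := by
    rw [wordWeight_map hsort.nodup]
    congr
    ext i
    simp [hfix]
  rw [hdel, wordWeight_map (List.nodup_finRange n), List.toFinset_finRange,
    ← Finset.sum_filter_add_sum_filter_not _ fun i => τ i = i] at hc
  linarith

end Words

section Blocks

variable {α ι κ : Type*} {w : ι → α × Bool} {π : κ → ι} {τ : κ → κ} {p q p' q' : ι}

/-- The numbers `M p q` of positions over `p` whose partner lies over `q`, where `π` groups the
positions into blocks and `τ` is a partial matching of them; as the unmatched positions are the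
fixed points of `τ`, they count towards the diagonal. -/
def blockMatrix [Fintype κ] [DecidableEq ι] (π : κ → ι) (τ : κ → κ) : Matrix ι ι ℕ :=
  .of fun p q => Finset.card {k | π k = p ∧ π (τ k) = q}

section

variable [Fintype κ] [DecidableEq ι]

lemma blockMatrix_pos_iff : 0 < blockMatrix π τ p q ↔ ∃ k, π k = p ∧ π (τ k) = q := by
  simp [blockMatrix, Finset.card_pos, Finset.Nonempty]

lemma blockMatrix_comm (hτ : Function.Involutive τ) (p q : ι) :
    blockMatrix π τ p q = blockMatrix π τ q p := by
  refine Finset.card_bij' (fun k _ => τ k) (fun k _ => τ k) ?_ ?_ ?_ ?_ <;>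
    simp +contextual [hτ _]

lemma sum_blockMatrix [Fintype ι] (p : ι) :
    ∑ q, blockMatrix π τ p q = Finset.card {k | π k = p} := by
  rw [Finset.card_eq_sum_card_fiberwise (f := π ∘ τ) (t := Finset.univ) (by simp)]
  simp [blockMatrix, Finset.filter_filter]

lemma inv_smul_blockMatrix_mem_doublyStochastic [Fintype ι] (hτ : Function.Involutive τ) {d : ℕ}
    (hd : d ≠ 0) (hπ : ∀ p, Finset.card {k | π k = p} = d) :
    (d : ℝ)⁻¹ • (blockMatrix π τ).map (Nat.cast : ℕ → ℝ) ∈ doublyStochastic ℝ ι := by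
  have row (p : ι) : ∑ q, (d : ℝ)⁻¹ * (blockMatrix π τ p q : ℝ) = 1 := by
    rw [← Finset.mul_sum, ← Nat.cast_sum, sum_blockMatrix, hπ, inv_mul_cancel₀ (by simpa)]
  rw [mem_doublyStochastic_iff_sum]
  refine ⟨fun p q => ?_, row, fun q => ?_⟩
  · simp only [Matrix.smul_apply, Matrix.map_apply, smul_eq_mul]
    positivity
  · simpa only [Matrix.smul_apply, Matrix.map_apply, smul_eq_mul, blockMatrix_comm hτ _ q]
      using row q

end

namespace IsNoncrossingPairing

lemma of_perm [LinearOrder ι] {R : ι → ι → Prop} (hR : ∀ p q, R p q → R q p)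
    (hletter : ∀ p q, R p q → q ≠ p → w q = ((w p).1, !(w p).2))
    (hcross : ∀ p q p' q', R p q → R p' q' → p < p' → p' < q → q' ≤ q)
    (σ : Equiv.Perm ι) (hσ : ∀ p, R p (σ p)) :
    IsNoncrossingPairing w fun p => if (w p).2 then σ p else σ.symm p := by
  have hσ' (p : ι) : R p (σ.symm p) := hR _ _ (by simpa using hσ (σ.symm p))
  have hR_ite (p : ι) : R p (if (w p).2 then σ p else σ.symm p) := by
    split_ifs
    exacts [hσ p, hσ' p]
  refine ⟨fun p => ?_, fun p hp => hletter _ _ (hR_ite p) hp, fun p p' hlt hlt' =>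
    hcross _ _ _ _ (hR_ite p) (hR_ite p') hlt hlt'⟩
  by_cases hp : σ p = p
  · have : σ.symm p = p := by rw [Equiv.symm_apply_eq, hp]
    simp [hp, this]
  · have hp' : σ.symm p ≠ p := by rwa [ne_eq, Equiv.symm_apply_eq, eq_comm]
    by_cases hw : (w p).2
    · simp [hw, hletter _ _ (hσ p) hp]
    · simp [hw, hletter _ _ (hσ' p) hp']

variable [LinearOrder κ] [Fintype κ]

section

variable [DecidableEq ι]

lemma blockMatrix_letter (hτ : IsNoncrossingPairing (w ∘ π) τ)
    (hpq : 0 < blockMatrix π τ p q) (hne : q ≠ p) : w q = ((w p).1, !(w p).2) := by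
  obtain ⟨k, rfl, rfl⟩ := blockMatrix_pos_iff.1 hpq
  exact hτ.letter k fun h => hne (congrArg π h)

lemma blockMatrix_self (hτ : IsNoncrossingPairing (w ∘ π) τ) (p : ι) :
    blockMatrix π τ p p = Finset.card {k | τ k = k ∧ π k = p} := by
  refine congrArg Finset.card (Finset.filter_congr fun k _ => ⟨?_, ?_⟩)
  · rintro ⟨rfl, h⟩
    refine ⟨of_not_not fun hk => ?_, rfl⟩
    simpa [h, Prod.ext_iff] using hτ.letter k hk
  · rintro ⟨h, rfl⟩
    simp [h]

lemma sum_blockMatrix_self_mul {R : Type*} [NonAssocSemiring R] [Fintype ι]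
    (hτ : IsNoncrossingPairing (w ∘ π) τ) (c : ι → R) :
    ∑ p, blockMatrix π τ p p * c p = ∑ k with τ k = k, c (π k) := by
  rw [← Finset.sum_fiberwise _ π]
  refine Finset.sum_congr rfl fun p _ => ?_
  rw [hτ.blockMatrix_self, Finset.filter_filter, ← nsmul_eq_mul, ← Finset.sum_const]
  exact Finset.sum_congr rfl (by simp +contextual)

end

variable [LinearOrder ι]

lemma blockMatrix_noncrossing (hτ : IsNoncrossingPairing (w ∘ π) τ)
    (hπ : Monotone π) (hpq : 0 < blockMatrix π τ p q) (hpq' : 0 < blockMatrix π τ p' q')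
    (hlt : p < p') (hlt' : p' < q) : q' ≤ q := by
  obtain ⟨k, rfl, rfl⟩ := blockMatrix_pos_iff.1 hpq
  obtain ⟨k', rfl, rfl⟩ := blockMatrix_pos_iff.1 hpq'
  exact hπ (hτ.noncrossing k k' (hπ.reflect_lt hlt) (hπ.reflect_lt hlt'))

lemma exists_of_comp [Fintype ι] (hτ : IsNoncrossingPairing (w ∘ π) τ)
    (hπ : Monotone π) {d : ℕ} (hd : d ≠ 0) (hcard : ∀ p, Finset.card {k | π k = p} = d)
    (c : ι → ℝ) :
    ∃ σ, IsNoncrossingPairing w σ ∧ d * ∑ p with σ p = p, c p ≤ ∑ k with τ k = k, c (π k) := by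
  obtain ⟨σ, hσ, hle⟩ := exists_perm_sum_le_of_mem_doublyStochastic
    (inv_smul_blockMatrix_mem_doublyStochastic hτ.involutive hd hcard)
    fun p q => if q = p then c p else 0
  have hσ_pos (p : ι) : 0 < blockMatrix π τ p (σ p) := by
    have := hσ p
    simp only [Matrix.smul_apply, Matrix.map_apply, smul_eq_mul] at this
    exact_mod_cast pos_of_mul_pos_right this (by positivity)
  have hfix (p : ι) : (if (w p).2 then σ p else σ.symm p) = p ↔ σ p = p := by
    split_ifs
    exacts [.rfl, by rw [Equiv.symm_apply_eq, eq_comm]]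
  refine ⟨_, .of_perm (R := fun p q => 0 < blockMatrix π τ p q)
    (fun p q h => by rwa [blockMatrix_comm hτ.involutive])
    (fun _ _ => hτ.blockMatrix_letter) (fun _ _ _ _ => hτ.blockMatrix_noncrossing hπ) σ hσ_pos, ?_⟩
  rw [← hτ.sum_blockMatrix_self_mul]
  simp only [hfix]
  rw [Finset.sum_filter, ← le_inv_mul_iff₀ (by positivity), Finset.mul_sum]
  simpa [mul_assoc] using hle

end IsNoncrossingPairing

end Blocks

section PsiD

open FreeGroup

variable {α : Type*} {μ : α → ℝ} {d n : ℕ}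

lemma psiD_mk_singleton (d : ℕ) (x : α × Bool) : psiD d (mk [x]) = mk [x] ^ d := by
  rcases x with ⟨a, _ | _⟩
  · change psiD d (of a)⁻¹ = (of a)⁻¹ ^ d
    rw [_root_.map_inv, psiD, lift_apply_of, inv_pow]
  · exact lift_apply_of

lemma psiD_mk (d : ℕ) (L : List (α × Bool)) :
    psiD d (mk L) = mk (L.flatMap (List.replicate d)) := by
  induction L with
  | nil => exact _root_.map_one _
  | cons x L ih =>
    rw [← List.singleton_append, ← mul_mk, _root_.map_mul, ih, psiD_mk_singleton, pow_mk]
    simp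

lemma flatMap_replicate_ofFn {β : Type*} (d : ℕ) (w : Fin n → β) :
    (List.ofFn w).flatMap (List.replicate d) = List.ofFn (w ∘ Fin.divNat (n := d)) := by
  rw [List.ofFn_mul, List.flatMap_def, List.map_ofFn]
  congr 2 with i : 1
  rw [Function.comp_apply, ← List.ofFn_const]
  congr with j : 1
  refine congrArg w (Fin.ext ?_)
  change (i : ℕ) = (i * d + j) / d
  rw [mul_comm, Nat.mul_add_div j.pos, Nat.div_eq_of_lt j.2, add_zero]

lemma psiD_mk_ofFn (d : ℕ) (w : Fin n → α × Bool) :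
    psiD d (mk (List.ofFn w)) = mk (List.ofFn (w ∘ Fin.divNat (n := d))) := by
  rw [psiD_mk, flatMap_replicate_ofFn]

lemma card_divNat_eq (p : Fin n) :
    Finset.card {k : Fin (n * d) | k.divNat = p} = d := by
  have := Finset.card_equiv (s := {k : Fin (n * d) | k.divNat = p}) (t := {p} ×ˢ Finset.univ)
    finProdFinEquiv.symm (by simp [eq_comm])
  simpa using this

lemma natCast_mul_wordNorm_le_of_mem_wordNormSet_psiD (hμ : ∀ a, 0 ≤ μ a) (hd : d ≠ 0)
    {g : FreeGroup α} {x : ℝ} (hx : x ∈ wordNormSet of μ (psiD d g)) :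
    d * wordNorm of μ g ≤ x := by
  obtain ⟨L, rfl⟩ := mk_surjective g
  rw [← List.ofFn_get L, psiD_mk_ofFn] at hx
  obtain ⟨τ, hτ, hτx⟩ := exists_isNoncrossingPairing_sum_fixed_le hμ hx
  obtain ⟨σ, hσ, hσx⟩ := hτ.exists_of_comp (fun k l h => Nat.div_le_div_right h) hd card_divNat_eq
    fun p => μ (L.get p).1
  have := wordNorm_le_of_mem_wordNormSet hμ (hσ.sum_fixed_mem_wordNormSet_ofFn μ)
  rw [List.ofFn_get] at this
  calc d * wordNorm of μ (mk L)
    _ ≤ d * ∑ p with σ p = p, μ (L.get p).1 := by gcongr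
    _ ≤ x := hσx.trans hτx

end PsiD

/-- for every positive integer `d` and every `g ∈ F(A)`,
`‖ψ_d(g)‖_{F(A;μ)} = d · ‖g‖_{F(A;μ)}`. -/
theorem psiD_wordNorm
    {α : Type*} (μ : α → ℝ) (hμ : ∀ a, 0 ≤ μ a)
    (d : ℕ) (hd : 0 < d) (g : FreeGroup α) :
    wordNorm FreeGroup.of μ (psiD d g) = (d : ℝ) * wordNorm FreeGroup.of μ g := by
  refine le_antisymm (wordNorm_map_le hμ d.cast_nonneg (fun a => ?_) (wordNormSet_nonempty μ g))
    (le_csInf (wordNormSet_nonempty μ _) fun x hx =>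
      natCast_mul_wordNorm_le_of_mem_wordNormSet_psiD hμ hd.ne' hx)
  rw [psiD, FreeGroup.lift_apply_of]
  exact natCast_mul_mem_wordNormSet_pow (mem_wordNormSet_gen a) d
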